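/- Let R be a noncommutative prime ring, let σ be a ring automorphism of R, and let Δ : R × R × R → R be a skew 3-derivation with respect to σ. Then Δ is identically zero. -/

import Mathlib

/-!
Fix one argument of `Δ`, leaving a map `D` that is a skew derivation in each of two arguments.
Expanding `D (x * u) (y * v)` in the two possible orders gives Brešar's identity
`D x y * z * [u, v] = σ ([x, y] * z) * D u v` (`skew_biderivation_identity`). Since the ring is prime
and noncommutative, `D x y = 0` whenever `x` and `y` commute (`skew_biderivation_eq_zero_of_commute`);
in particular `Δ u v u = 0`. The identity in the first two arguments, with third argument `u`, then
reads `Δ x y u * z * [u, v] = 0`. Hence `Δ x y u = 0` if `u` is not central, and if `u` is central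
it commutes with `x`, so `Δ x y u = 0` again.
-/

theorem skew_biderivation_identity {R : Type*} [Ring R] (σ : R ≃+* R) (D : R → R → R)
    (hmul1 : ∀ x y b : R, D (x * y) b = D x b * y + σ x * D y b)
    (hmul2 : ∀ a x y : R, D a (x * y) = D a x * y + σ x * D a y) (x y z u v : R) :
    D x y * z * (u * v - v * u) = σ ((x * y - y * x) * z) * D u v := by
  have key : ∀ u v, D x y * (u * v - v * u) = σ (x * y - y * x) * D u v := by
    intro u v
    have h := hmul1 x u (y * v)
    rw [hmul2 (x * u) y v, hmul2 x y v, hmul2 u y v, hmul1 x u y, hmul1 x u v] at h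
    rw [map_sub, map_mul, map_mul, ← sub_eq_zero]
    rw [← sub_eq_zero] at h
    rw [← h]
    noncomm_ring
  -- Apply `key` to `(u, z * v)` and use `[u, z * v] = [u, z] * v + z * [u, v]`.
  have h1 := key u (z * v)
  have h2 := key u z
  rw [hmul2 u z v, mul_add, ← mul_assoc _ (D u z), ← h2] at h1
  rw [map_mul, mul_assoc (σ _), ← sub_eq_zero]
  rw [← sub_eq_zero] at h1
  rw [← h1]
  noncomm_ring

theorem skew_biderivation_eq_zero_of_commute {R : Type*} [Ring R]
    (hprime : ∀ a b : R, (∀ x : R, a * x * b = 0) → a = 0 ∨ b = 0)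
    (hnoncomm : ∃ x y : R, x * y ≠ y * x) (σ : R ≃+* R) (D : R → R → R)
    (hmul1 : ∀ x y b : R, D (x * y) b = D x b * y + σ x * D y b)
    (hmul2 : ∀ a x y : R, D a (x * y) = D a x * y + σ x * D a y) (x y : R)
    (hxy : x * y = y * x) : D x y = 0 := by
  obtain ⟨u, v, huv⟩ := hnoncomm
  refine (hprime (D x y) (u * v - v * u) fun z => ?_).resolve_right (sub_ne_zero.2 huv)
  rw [skew_biderivation_identity σ D hmul1 hmul2, hxy, sub_self, zero_mul, map_zero, zero_mul]


theorem skew_3_derivation_on_noncommutative_prime_is_zero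
    {R : Type*} [Ring R]
    (hprime : ∀ a b : R, (∀ x : R, a * x * b = 0) → a = 0 ∨ b = 0)
    (hnoncomm : ∃ x y : R, x * y ≠ y * x)
    (σ : R ≃+* R) (Δ : R → R → R → R)
    (hadd1 : ∀ x y b c : R, Δ (x + y) b c = Δ x b c + Δ y b c)
    (hadd2 : ∀ a x y c : R, Δ a (x + y) c = Δ a x c + Δ a y c)
    (hadd3 : ∀ a b x y : R, Δ a b (x + y) = Δ a b x + Δ a b y)
    (hmul1 : ∀ x y b c : R, Δ (x * y) b c = Δ x b c * y + σ x * Δ y b c)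
    (hmul2 : ∀ a x y c : R, Δ a (x * y) c = Δ a x c * y + σ x * Δ a y c)
    (hmul3 : ∀ a b x y : R, Δ a b (x * y) = Δ a b x * y + σ x * Δ a b y) :
    ∀ x y z : R, Δ x y z = 0 := by
  have h13 : ∀ x b c, x * c = c * x → Δ x b c = 0 := fun x b c =>
    skew_biderivation_eq_zero_of_commute hprime hnoncomm σ (fun x c => Δ x b c)
      (fun x y c => hmul1 x y b c) (fun a x y => hmul3 a b x y) x c
  intro x y u
  by_cases hu : ∀ v, u * v = v * u
  · exact h13 x y u (hu x).symm
  · obtain ⟨v, hv⟩ := not_forall.1 hu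
    refine (hprime (Δ x y u) (u * v - v * u) fun z => ?_).resolve_right (sub_ne_zero.2 hv)
    rw [skew_biderivation_identity σ (fun x y => Δ x y u) (fun x y b => hmul1 x y b u)
      (fun a x y => hmul2 a x y u), h13 u v u rfl, mul_zero]
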